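/- Let n ≥ 1 and let ρ, γ be density matrices (n×n complex positive semidefinite matrices of trace 1) with γ positive definite. Then H(ρ, γ) ≥ −2·log( Tr(√ρ · √γ) ). -/

import Mathlib

open Matrix ComplexOrder

/-- Apply a real function to a Hermitian matrix via the spectral decomposition
`A = U D U*`: the result is `U (f(D)) U*` where `f` acts on the diagonal. -/
noncomputable def mfun {m : Type*} [Fintype m] [DecidableEq m]
    (f : ℝ → ℝ) (A : Matrix m m ℂ) : Matrix m m ℂ :=
  if hA : A.IsHermitian then hA.cfc f else 0

/-- Matrix logarithm via spectral decomposition, with the convention `log 0 = 0`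
(note `Real.log 0 = 0`). -/
noncomputable def matLog {m : Type*} [Fintype m] [DecidableEq m]
    (A : Matrix m m ℂ) : Matrix m m ℂ :=
  mfun Real.log A

/-- The positive semidefinite square root of a positive semidefinite matrix,
via spectral decomposition. -/
noncomputable def matSqrt {m : Type*} [Fintype m] [DecidableEq m]
    (A : Matrix m m ℂ) : Matrix m m ℂ :=
  mfun Real.sqrt A

/-- Real power of a (positive semidefinite / positive definite) matrix via spectral
decomposition. -/
noncomputable def matRpow {m : Type*} [Fintype m] [DecidableEq m]
    (t : ℝ) (A : Matrix m m ℂ) : Matrix m m ℂ :=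
  mfun (fun u => u ^ t) A

/-- The von Neumann entropy `S(ρ) = -Tr(ρ log ρ)`. -/
noncomputable def vnEntropy {m : Type*} [Fintype m] [DecidableEq m]
    (ρ : Matrix m m ℂ) : ℝ :=
  -(Matrix.trace (ρ * matLog ρ)).re

/-- The quantum relative entropy `H(ρ, γ) = Tr(ρ (log ρ - log γ))`. -/
noncomputable def relEntropy {m : Type*} [Fintype m] [DecidableEq m]
    (ρ γ : Matrix m m ℂ) : ℝ :=
  (Matrix.trace (ρ * (matLog ρ - matLog γ))).re

/-- The trace norm of a Hermitian matrix: the sum of the absolute values of its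
eigenvalues. -/
noncomputable def traceNorm {m : Type*} [Fintype m] [DecidableEq m]
    (A : Matrix m m ℂ) : ℝ :=
  if hA : A.IsHermitian then ∑ i, |hA.eigenvalues i| else 0

/-- A density matrix: positive semidefinite with trace 1. -/
def IsDensity {m : Type*} [Fintype m] [DecidableEq m] (ρ : Matrix m m ℂ) : Prop :=
  ρ.PosSemidef ∧ Matrix.trace ρ = 1

/-- The binary entropy `h(x) = -x log x - (1-x) log (1-x)`. -/
noncomputable def binEntropy (x : ℝ) : ℝ :=
  -(x * Real.log x) - (1 - x) * Real.log (1 - x)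

/-- The Renyi relative entropy `H_a(ρ,γ) = (a-1)⁻¹ log Tr(ρ^a γ^(1-a))`. -/
noncomputable def renyiRel {m : Type*} [Fintype m] [DecidableEq m]
    (a : ℝ) (ρ γ : Matrix m m ℂ) : ℝ :=
  (a - 1)⁻¹ * Real.log (Matrix.trace (matRpow a ρ * matRpow (1 - a) γ)).re

/-- The sandwiched Renyi relative entropy
`H̃_a(ρ,γ) = (a-1)⁻¹ log Tr((γ^((1-a)/(2a)) ρ γ^((1-a)/(2a)))^a)`. -/
noncomputable def sandRenyiRel {m : Type*} [Fintype m] [DecidableEq m]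
    (a : ℝ) (ρ γ : Matrix m m ℂ) : ℝ :=
  (a - 1)⁻¹ * Real.log
    (Matrix.trace (matRpow a
      (matRpow ((1 - a) / (2 * a)) γ * ρ * matRpow ((1 - a) / (2 * a)) γ))).re

/-!
Let `pᵢ`, `uᵢ` and `qⱼ`, `vⱼ` be the eigenvalues and eigenvectors of `ρ` and `γ`, and put
`wᵢⱼ = |⟨uᵢ, vⱼ⟩|²`. Then `Tr (f(ρ) g(γ)) = ∑ᵢⱼ wᵢⱼ f(pᵢ) g(qⱼ)` for all `f` and `g`, so the claim
becomes one about nonnegative numbers. Put `aᵢⱼ = wᵢⱼ pᵢ` and `bᵢⱼ = wᵢⱼ √pᵢ √qⱼ`. If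
`ker γ ⊆ ker ρ`, then `bᵢⱼ = 0` forces `aᵢⱼ = 0`, and `H(ρ, γ) = 2 ∑ᵢⱼ aᵢⱼ log (aᵢⱼ / bᵢⱼ)`.
Since `∑ᵢⱼ aᵢⱼ = Tr ρ` and `∑ᵢⱼ bᵢⱼ = Tr (√ρ √γ)`, the log sum inequality gives the bound.
-/

theorem sub_mul_div_le_mul_log_div_sub {a b A B : ℝ} (ha : 0 ≤ a) (hb : 0 ≤ b)
    (hab : b = 0 → a = 0) (hA : 0 < A) (hB : 0 < B) :
    a - b * (A / B) ≤ a * Real.log (a / b) - a * Real.log (A / B) := by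
  rcases ha.eq_or_lt with rfl | ha
  · simp only [zero_div, Real.log_zero, zero_mul, sub_zero, zero_sub, neg_nonpos]
    positivity
  have hb : 0 < b := hb.lt_of_ne fun h => ha.ne' (hab h.symm)
  calc a - b * (A / B) = a * (1 - (a / b / (A / B))⁻¹) := by field_simp
    _ ≤ a * Real.log (a / b / (A / B)) := by
      gcongr
      exact Real.one_sub_inv_le_log_of_pos (by positivity)
    _ = a * Real.log (a / b) - a * Real.log (A / B) := by
      rw [Real.log_div (by positivity) (by positivity), mul_sub]

theorem sum_mul_log_sum_div_sum_le {ι : Type*} (s : Finset ι) {a b : ι → ℝ}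
    (ha : ∀ i ∈ s, 0 ≤ a i) (hb : ∀ i ∈ s, 0 ≤ b i) (hab : ∀ i ∈ s, b i = 0 → a i = 0) :
    (∑ i ∈ s, a i) * Real.log ((∑ i ∈ s, a i) / ∑ i ∈ s, b i) ≤
      ∑ i ∈ s, a i * Real.log (a i / b i) := by
  set A := ∑ i ∈ s, a i with hA_def
  set B := ∑ i ∈ s, b i
  rcases (Finset.sum_nonneg ha).eq_or_lt with hA | hA
  · have ha_zero := (Finset.sum_eq_zero_iff_of_nonneg ha).1 hA.symm
    rw [hA_def, ← hA, zero_mul]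
    exact (Finset.sum_eq_zero fun i hi => by rw [ha_zero i hi, zero_mul]).ge
  have hB : 0 < B := (Finset.sum_nonneg hb).lt_of_ne fun hB => hA.ne' <|
    Finset.sum_eq_zero fun i hi => hab i hi ((Finset.sum_eq_zero_iff_of_nonneg hb).1 hB.symm i hi)
  refine sub_nonneg.1 ?_
  calc 0 = A - B * (A / B) := by rw [mul_div_cancel₀ A hB.ne', sub_self]
    _ = ∑ i ∈ s, (a i - b i * (A / B)) := by rw [Finset.sum_sub_distrib, Finset.sum_mul]
    _ ≤ ∑ i ∈ s, (a i * Real.log (a i / b i) - a i * Real.log (A / B)) :=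
      Finset.sum_le_sum fun i hi =>
        sub_mul_div_le_mul_log_div_sub (ha i hi) (hb i hi) (hab i hi) hA hB
    _ = ∑ i ∈ s, a i * Real.log (a i / b i) - A * Real.log (A / B) := by
      rw [Finset.sum_sub_distrib, Finset.sum_mul]

theorem mul_log_sub_log_eq_two_mul_mul_log_div {w p q : ℝ} (hp : 0 ≤ p) (hq : 0 ≤ q)
    (h : q = 0 → w * p = 0) :
    w * (p * (Real.log p - Real.log q)) =
      2 * (w * p * Real.log (w * p / (w * (√p * √q)))) := by
  by_cases hwp : w * p = 0
  · rw [← mul_assoc, hwp, zero_mul, zero_mul, mul_zero]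
  obtain ⟨hw, hp_ne⟩ := mul_ne_zero_iff.1 hwp
  have hp : 0 < p := hp.lt_of_ne' hp_ne
  have hq : 0 < q := hq.lt_of_ne' fun hq => hwp (h hq)
  have hratio : w * p / (w * (√p * √q)) = √(p / q) := by
    rw [mul_div_mul_left _ _ hw, div_mul_eq_div_div, Real.div_sqrt, Real.sqrt_div hp.le]
  rw [hratio, Real.log_sqrt (by positivity), Real.log_div hp.ne' hq.ne']
  ring

section EigenvectorOverlap

variable {𝕜 m n : Type*} [RCLike 𝕜] [Fintype m] [DecidableEq m] [Fintype n] [DecidableEq n]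

theorem trace_diagonal_mul_mul_diagonal_mul_conjTranspose (a : m → ℝ) (b : n → ℝ)
    (W : Matrix m n 𝕜) :
    trace (diagonal (RCLike.ofReal ∘ a : m → 𝕜) * W * diagonal (RCLike.ofReal ∘ b : n → 𝕜) * Wᴴ) =
      ((∑ i, ∑ j, ‖W i j‖ ^ 2 * (a i * b j) : ℝ) : 𝕜) := by
  simp only [trace, diag_apply, mul_apply (N := Wᴴ), mul_diagonal, diagonal_mul,
    conjTranspose_apply, Function.comp_apply, RCLike.ofReal_sum]
  refine Finset.sum_congr rfl fun i _ => Finset.sum_congr rfl fun j _ => ?_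
  push_cast
  rw [← RCLike.mul_conj, starRingEnd_apply]
  ring

/-- The matrix of inner products `⟨uᵢ, vⱼ⟩` between the orthonormal eigenbases `u` of `A` and `v`
of `B` chosen by the spectral theorem, encoded as `U* V` for the unitary matrices with columns `u`
and `v`. Its squared moduli are the weights that express traces of products of functions of `A`
and `B` through eigenvalues. -/
noncomputable def eigenvectorOverlap {A B : Matrix m m 𝕜} (hA : A.IsHermitian)
    (hB : B.IsHermitian) : Matrix m m 𝕜 :=
  star (hA.eigenvectorUnitary : Matrix m m 𝕜) * (hB.eigenvectorUnitary : Matrix m m 𝕜)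

variable {A B : Matrix m m 𝕜}

theorem trace_cfc_mul_cfc (hA : A.IsHermitian) (hB : B.IsHermitian) (f g : ℝ → ℝ) :
    trace (cfc f A * cfc g B) =
      ((∑ i, ∑ j, ‖eigenvectorOverlap hA hB i j‖ ^ 2 *
        (f (hA.eigenvalues i) * g (hB.eigenvalues j)) : ℝ) : 𝕜) := by
  rw [hA.cfc_eq, hB.cfc_eq, IsHermitian.cfc, IsHermitian.cfc, Unitary.conjStarAlgAut_apply,
    Unitary.conjStarAlgAut_apply]
  refine Eq.trans ?_ (trace_diagonal_mul_mul_diagonal_mul_conjTranspose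
    (f ∘ hA.eigenvalues) (g ∘ hB.eigenvalues) (eigenvectorOverlap hA hB))
  simp only [eigenvectorOverlap, star_eq_conjTranspose, conjTranspose_mul,
    conjTranspose_conjTranspose, Matrix.mul_assoc]
  rw [trace_mul_comm]
  simp only [Matrix.mul_assoc]

theorem trace_eq_sum_sq_norm_eigenvectorOverlap_mul_eigenvalues (hA : A.IsHermitian)
    (hB : B.IsHermitian) :
    trace A =
      ((∑ i, ∑ j, ‖eigenvectorOverlap hA hB i j‖ ^ 2 * hA.eigenvalues i : ℝ) : 𝕜) := by
  have h := trace_cfc_mul_cfc hA hB (fun x => x) (fun _ => 1)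
  rw [cfc_id' ℝ A hA.isSelfAdjoint, cfc_const_one ℝ B hB.isSelfAdjoint] at h
  simpa only [mul_one] using h

theorem eigenvalues_mul_eigenvectorOverlap (hA : A.IsHermitian) (hB : B.IsHermitian) (i j : m) :
    (hA.eigenvalues i : 𝕜) * eigenvectorOverlap hA hB i j =
      (star (hA.eigenvectorUnitary : Matrix m m 𝕜) *ᵥ (A *ᵥ ⇑(hB.eigenvectorBasis j))) i := by
  have hdiag : diagonal (RCLike.ofReal ∘ hA.eigenvalues) *
      star (hA.eigenvectorUnitary : Matrix m m 𝕜) =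
        star (hA.eigenvectorUnitary : Matrix m m 𝕜) * A := by
    rw [← hA.conjStarAlgAut_star_eigenvectorUnitary, Unitary.conjStarAlgAut_star_apply,
      Matrix.mul_assoc, Unitary.mul_star_self_of_mem hA.eigenvectorUnitary.2, Matrix.mul_one]
  rw [mulVec_mulVec, ← hdiag, ← hB.eigenvectorUnitary_mulVec, mulVec_mulVec, mulVec_single_one,
    Matrix.mul_assoc, col_apply, diagonal_mul, Function.comp_apply,
    eigenvectorOverlap]

theorem sq_norm_eigenvectorOverlap_mul_eigenvalues_eq_zero (hA : A.IsHermitian)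
    (hB : B.IsHermitian) (hker : ∀ v, B *ᵥ v = 0 → A *ᵥ v = 0) (i : m) {j : m}
    (hj : hB.eigenvalues j = 0) :
    ‖eigenvectorOverlap hA hB i j‖ ^ 2 * hA.eigenvalues i = 0 := by
  have hBv : B *ᵥ ⇑(hB.eigenvectorBasis j) = 0 := by
    rw [hB.mulVec_eigenvectorBasis, hj, zero_smul]
  have hmul : (hA.eigenvalues i : 𝕜) * eigenvectorOverlap hA hB i j = 0 := by
    rw [eigenvalues_mul_eigenvectorOverlap, hker _ hBv, mulVec_zero, Pi.zero_apply]
  rcases mul_eq_zero.1 hmul with hp | hW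
  · rw [RCLike.ofReal_eq_zero.1 hp, mul_zero]
  · rw [hW, norm_zero, zero_pow two_ne_zero, zero_mul]

end EigenvectorOverlap

section RelEntropy

variable {m : Type*} [Fintype m] [DecidableEq m]

theorem mfun_eq_cfc (f : ℝ → ℝ) (A : Matrix m m ℂ) : mfun f A = cfc f A := by
  by_cases hA : A.IsHermitian
  · rw [mfun, dif_pos hA, hA.cfc_eq]
  · rw [mfun, dif_neg hA, cfc_apply_of_not_predicate (p := IsSelfAdjoint) A hA]

theorem mul_matLog_eq_cfc {A : Matrix m m ℂ} (hA : A.IsHermitian) :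
    A * matLog A = cfc (fun x => x * Real.log x) A := by
  have hcont (f : ℝ → ℝ) : ContinuousOn f (spectrum ℝ A) := A.finite_real_spectrum.continuousOn f
  rw [cfc_mul (fun x => x) Real.log A (hcont _) (hcont _), cfc_id' ℝ A hA.isSelfAdjoint,
    matLog, mfun_eq_cfc]

variable {ρ γ : Matrix m m ℂ}

theorem relEntropy_eq_sum (hρ : ρ.IsHermitian) (hγ : γ.IsHermitian) :
    relEntropy ρ γ = ∑ i, ∑ j, ‖eigenvectorOverlap hρ hγ i j‖ ^ 2 *
      (hρ.eigenvalues i * (Real.log (hρ.eigenvalues i) - Real.log (hγ.eigenvalues j))) := by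
  have hself := trace_cfc_mul_cfc hρ hγ (fun x => x * Real.log x) (fun _ => 1)
  have hcross := trace_cfc_mul_cfc hρ hγ (fun x => x) Real.log
  rw [cfc_const_one ℝ γ hγ.isSelfAdjoint, mul_one, ← mul_matLog_eq_cfc hρ] at hself
  rw [cfc_id' ℝ ρ hρ.isSelfAdjoint, ← mfun_eq_cfc, ← matLog] at hcross
  rw [relEntropy, Matrix.mul_sub, trace_sub, hself, hcross]
  simp only [← RCLike.re_to_complex, map_sub, RCLike.ofReal_re, mul_one, mul_sub,
    Finset.sum_sub_distrib]

theorem trace_matSqrt_mul_matSqrt_eq_sum (hρ : ρ.IsHermitian) (hγ : γ.IsHermitian) :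
    trace (matSqrt ρ * matSqrt γ) =
      ((∑ i, ∑ j, ‖eigenvectorOverlap hρ hγ i j‖ ^ 2 *
        (√(hρ.eigenvalues i) * √(hγ.eigenvalues j)) : ℝ) : ℂ) := by
  rw [matSqrt, matSqrt, mfun_eq_cfc, mfun_eq_cfc]
  exact trace_cfc_mul_cfc hρ hγ Real.sqrt Real.sqrt

theorem relEntropy_ge_neg_two_log_fidelity_general (hρ : ρ.PosSemidef) (hγ : γ.PosSemidef)
    (hker : ∀ v, γ *ᵥ v = 0 → ρ *ᵥ v = 0) :
    relEntropy ρ γ ≥ -2 * (trace ρ).re *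
      Real.log ((trace (matSqrt ρ * matSqrt γ)).re / (trace ρ).re) := by
  have hρ' := hρ.isHermitian
  have hγ' := hγ.isHermitian
  let w (x : m × m) : ℝ := ‖eigenvectorOverlap hρ' hγ' x.1 x.2‖ ^ 2
  let p (x : m × m) : ℝ := hρ'.eigenvalues x.1
  let q (x : m × m) : ℝ := hγ'.eigenvalues x.2
  have hw (x) : 0 ≤ w x := sq_nonneg _
  have hp (x) : 0 ≤ p x := hρ.eigenvalues_nonneg x.1
  have hq (x) : 0 ≤ q x := hγ.eigenvalues_nonneg x.2
  have hwp (x) (hx : q x = 0) : w x * p x = 0 :=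
    sq_norm_eigenvectorOverlap_mul_eigenvalues_eq_zero hρ' hγ' hker x.1 hx
  have htrace : (trace ρ).re = ∑ x, w x * p x := by
    rw [trace_eq_sum_sq_norm_eigenvectorOverlap_mul_eigenvalues hρ' hγ',
      Fintype.sum_prod_type]
    rfl
  have hfidelity : (trace (matSqrt ρ * matSqrt γ)).re = ∑ x, w x * (√(p x) * √(q x)) := by
    rw [trace_matSqrt_mul_matSqrt_eq_sum hρ' hγ', Fintype.sum_prod_type]
    rfl
  have hentropy : relEntropy ρ γ =
      2 * ∑ x, w x * p x * Real.log (w x * p x / (w x * (√(p x) * √(q x)))) := by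
    rw [relEntropy_eq_sum hρ' hγ', ← Fintype.sum_prod_type', Finset.mul_sum]
    exact Finset.sum_congr rfl fun x _ =>
      mul_log_sub_log_eq_two_mul_mul_log_div (hp x) (hq x) (hwp x)
  have hsupport (x) (hx : w x * (√(p x) * √(q x)) = 0) : w x * p x = 0 := by
    simp only [mul_eq_zero, Real.sqrt_eq_zero (hp x), Real.sqrt_eq_zero (hq x)] at hx
    rcases hx with h | h | h
    · rw [h, zero_mul]
    · rw [h, mul_zero]
    · exact hwp x h
  have hlog_sum := sum_mul_log_sum_div_sum_le Finset.univ (fun x _ => mul_nonneg (hw x) (hp x))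
    (fun x _ => mul_nonneg (hw x) (by positivity)) (fun x _ => hsupport x)
  rw [← htrace, ← hfidelity, ← inv_div, Real.log_inv] at hlog_sum
  rw [hentropy]
  linarith

end RelEntropy

theorem relEntropy_ge_neg_two_log_fidelity (n : ℕ) (hn : 1 ≤ n)
    (ρ γ : Matrix (Fin n) (Fin n) ℂ) (hρ : IsDensity ρ) (hγ : IsDensity γ)
    (hγ' : γ.PosDef) :
    relEntropy ρ γ ≥ -2 * Real.log (Matrix.trace (matSqrt ρ * matSqrt γ)).re := by
  have hker (v : Fin n → ℂ) (hv : γ *ᵥ v = 0) : ρ *ᵥ v = 0 := by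
    have hv_zero : v = 0 :=
      mulVec_injective_of_isUnit hγ'.isUnit (hv.trans (mulVec_zero γ).symm)
    rw [hv_zero, mulVec_zero]
  simpa [hρ.2] using relEntropy_ge_neg_two_log_fidelity_general hρ.1 hγ.1 hker
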